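/- Let {S_n}_{n≥0} be a positive real sequence satisfying S_n = a(n)S_{n−1} + b(n)S_{n−2} for n ≥ 2, where a, b are real-valued functions, and let N be a positive integer. Suppose c_3(n) > 0 and Δ(n) > 0 for all n ≥ N, and suppose there exists a real-valued function f such that for all n ≥ N: (I) S_n/S_{n−1} ≥ f(n); (II) f(n) ≥ (−2c_2(n) + √Δ(n))/(6c_3(n)); (III) c_3(n)f(n)^3 + c_2(n)f(n)^2 + c_1(n)f(n) + c_0(n) > 0. Then for all n ≥ N, (S_{n+1}^2 − S_n S_{n+2})^2 < (S_n^2 − S_{n−1}S_{n+1})(S_{n+2}^2 − S_{n+1}S_{n+3}); in particular the sequence {S_n^2 − S_{n−1}S_{n+1}}_{n≥N} is strictly log-convex. -/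

import Mathlib

/-!
Put `T n = S n ^ 2 - S (n - 1) * S (n + 1)`. Expressing `S (n + 1)`, `S (n + 2)`, `S (n + 3)` through
`x = S (n - 1)` and `y = S n` by the recurrence gives the identity
`T n * T (n + 2) - T (n + 1) ^ 2 = S (n + 1) * (c₃ y ^ 3 + c₂ y ^ 2 x + c₁ y x ^ 2 + c₀ x ^ 3)`,
so it suffices that the cubic `g t = c₃ t ^ 3 + c₂ t ^ 2 + c₁ t + c₀` is positive at `t = y / x`.
Hypothesis `hII` says that `f n` is at least the larger critical point of `g`, beyond which `g` is
increasing (`cubic_le_of_critical_le`); hence `0 < g (f n) ≤ g (y / x)` by `hIII` and `hI`.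
-/

/-- `c_0(n)` associated to a three-term recurrence with coefficients `a`, `b`. -/
noncomputable def c0 (a b : ℕ → ℝ) (n : ℕ) : ℝ :=
  -(b (n+1)) ^ 2 * (a (n+2) ^ 2 + b (n+1) - a (n+2) * a (n+3) - b (n+3))

/-- `c_1(n)` associated to a three-term recurrence with coefficients `a`, `b`. -/
noncomputable def c1 (a b : ℕ → ℝ) (n : ℕ) : ℝ :=
  b (n+1) * (2 * a (n+2) * b (n+1) + 2 * a (n+3) * a (n+2) * a (n+1)
    + a (n+3) * b (n+2) + 2 * a (n+1) * b (n+3) - 2 * a (n+2) ^ 2 * a (n+1)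
    - 2 * a (n+2) * b (n+2) - 3 * a (n+1) * b (n+1))

/-- `c_2(n)` associated to a three-term recurrence with coefficients `a`, `b`. -/
noncomputable def c2 (a b : ℕ → ℝ) (n : ℕ) : ℝ :=
  4 * a (n+1) * a (n+2) * b (n+1) + 2 * b (n+1) * b (n+2)
    + a (n+1) ^ 2 * a (n+2) * a (n+3) + a (n+1) * a (n+3) * b (n+2)
    + a (n+1) ^ 2 * b (n+3) - 3 * a (n+1) ^ 2 * b (n+1)
    - a (n+3) * a (n+2) * b (n+1) - a (n+2) ^ 2 * a (n+1) ^ 2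
    - b (n+3) * b (n+1) - 2 * a (n+2) * a (n+1) * b (n+2) - b (n+2) ^ 2

/-- `c_3(n)` associated to a three-term recurrence with coefficients `a`, `b`. -/
noncomputable def c3 (a b : ℕ → ℝ) (n : ℕ) : ℝ :=
  2 * a (n+1) ^ 2 * a (n+2) + 2 * a (n+1) * b (n+2) - a (n+1) * b (n+3)
    - a (n+1) ^ 3 - a (n+1) * a (n+2) * a (n+3) - a (n+3) * b (n+2)

/-- `Δ(n) = 4 c_2(n)^2 - 12 c_1(n) c_3(n)`. -/
noncomputable def Δ (a b : ℕ → ℝ) (n : ℕ) : ℝ :=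
  4 * (c2 a b n) ^ 2 - 12 * (c1 a b n) * (c3 a b n)

/-- A cubic with positive leading coefficient is nondecreasing to the right of its larger critical
point. -/
theorem cubic_le_of_critical_le {p q r s f t : ℝ} (hp : 0 < p)
    (hD : 0 ≤ 4 * q ^ 2 - 12 * r * p)
    (hf : (-2 * q + Real.sqrt (4 * q ^ 2 - 12 * r * p)) / (6 * p) ≤ f) (hft : f ≤ t) :
    p * f ^ 3 + q * f ^ 2 + r * f + s ≤ p * t ^ 3 + q * t ^ 2 + r * t + s := by
  have hsqrt : Real.sqrt (4 * q ^ 2 - 12 * r * p) ≤ 6 * p * f + 2 * q := by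
    rw [div_le_iff₀ (by positivity)] at hf
    linarith
  have hslope : 0 ≤ 6 * p * f + 2 * q := (Real.sqrt_nonneg _).trans hsqrt
  have hderiv : 0 ≤ 3 * p * f ^ 2 + 2 * q * f + r := by
    have hsq : 4 * q ^ 2 - 12 * r * p ≤ (6 * p * f + 2 * q) ^ 2 := by
      rw [← Real.sq_sqrt hD]
      exact pow_le_pow_left₀ (Real.sqrt_nonneg _) hsqrt 2
    have hmul : 0 ≤ 12 * p * (3 * p * f ^ 2 + 2 * q * f + r) := by linarith
    exact nonneg_of_mul_nonneg_right hmul (by positivity)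
  -- Taylor expansion of the cubic at `f`.
  have hδ : 0 ≤ t - f := sub_nonneg.mpr hft
  have h1 := mul_nonneg hδ hderiv
  have h2 := mul_nonneg (pow_nonneg hδ 2) hslope
  have h3 := mul_nonneg hp.le (pow_nonneg hδ 3)
  linarith

/-- A criterion for the strict log-convexity of `{S_n^2 - S_{n-1} S_{n+1}}_{n ≥ N}`
for a positive sequence satisfying a three-term recurrence. -/
theorem stmt_9 (S a b : ℕ → ℝ) (hpos : ∀ n, 0 < S n)
    (hrec : ∀ n : ℕ, 2 ≤ n → S n = a n * S (n - 1) + b n * S (n - 2))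
    (N : ℕ) (hN : 1 ≤ N)
    (hc3 : ∀ n : ℕ, N ≤ n → 0 < c3 a b n)
    (hΔ : ∀ n : ℕ, N ≤ n → 0 < Δ a b n)
    (f : ℕ → ℝ)
    (hI : ∀ n : ℕ, N ≤ n → f n ≤ S n / S (n - 1))
    (hII : ∀ n : ℕ, N ≤ n →
      (-2 * c2 a b n + Real.sqrt (Δ a b n)) / (6 * c3 a b n) ≤ f n)
    (hIII : ∀ n : ℕ, N ≤ n →
      0 < c3 a b n * f n ^ 3 + c2 a b n * f n ^ 2 + c1 a b n * f n + c0 a b n) :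
    ∀ n : ℕ, N ≤ n →
      (S (n + 1) ^ 2 - S n * S (n + 2)) ^ 2 <
        (S n ^ 2 - S (n - 1) * S (n + 1)) * (S (n + 2) ^ 2 - S (n + 1) * S (n + 3)) := by
  intro n hn
  have h1 : S (n + 1) = a (n + 1) * S n + b (n + 1) * S (n - 1) := by
    simpa [show n + 1 - 2 = n - 1 by omega] using hrec (n + 1) (by omega)
  have h2 : S (n + 2) = a (n + 2) * S (n + 1) + b (n + 2) * S n := by
    simpa using hrec (n + 2) (by omega)
  have h3 : S (n + 3) = a (n + 3) * S (n + 2) + b (n + 3) * S (n + 1) := by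
    simpa using hrec (n + 3) (by omega)
  have hx : 0 < S (n - 1) := hpos _
  have hg := (hIII n hn).trans_le
    (cubic_le_of_critical_le (s := c0 a b n) (hc3 n hn) (hΔ n hn).le (hII n hn) (hI n hn))
  have hkey : (S n ^ 2 - S (n - 1) * S (n + 1)) * (S (n + 2) ^ 2 - S (n + 1) * S (n + 3))
      - (S (n + 1) ^ 2 - S n * S (n + 2)) ^ 2
      = S (n + 1) * (c3 a b n * S n ^ 3 + c2 a b n * S n ^ 2 * S (n - 1)
        + c1 a b n * S n * S (n - 1) ^ 2 + c0 a b n * S (n - 1) ^ 3) := by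
    rw [h3, h2, h1]
    unfold c0 c1 c2 c3
    ring
  -- Homogenization of the cubic, with `S n / S (n - 1)` as the affine coordinate.
  have hhom : c3 a b n * S n ^ 3 + c2 a b n * S n ^ 2 * S (n - 1)
        + c1 a b n * S n * S (n - 1) ^ 2 + c0 a b n * S (n - 1) ^ 3
      = S (n - 1) ^ 3 * (c3 a b n * (S n / S (n - 1)) ^ 3 + c2 a b n * (S n / S (n - 1)) ^ 2
        + c1 a b n * (S n / S (n - 1)) + c0 a b n) := by
    field_simp
  rw [hhom] at hkey
  have := mul_pos (hpos (n + 1)) (mul_pos (pow_pos hx 3) hg)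
  linarith
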